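/- Let H₀, H₀', J₀, J₀', H₁, J₁, J₁', ε₀, ε₁, k₀, k₁, α be arbitrary complex numbers with ε₁ ≠ 0, and set P := J₀ + α·k₀·J₀'. Define M₂ := ![![k₀·H₀'·P, −ε₀·H₀·P], ![−k₁·H₁·J₁', ε₁·H₁·J₁]] and M₃ := ![![k₀·H₀'·P, −ε₀·H₀·P, 0], ![−1, 0, H₁·J₁], ![0, −1, (k₁/ε₁)·H₁·J₁']]. Then the linear map ℂ³ → ℂ³ defined by M₃ is injective if and only if the linear map ℂ² → ℂ² defined by M₂ is injective. Equivalently, M₃ has a nonzero vector in its kernel if and only if M₂ has a nonzero vector in its kernel. -/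

import Mathlib

/-!
The last two rows `(-1, 0, c)` and `(0, -1, d)` of the mixed system express the first two unknowns
through the third one `φ` as `(c * φ, d * φ)`, so the Burton–Miller row `(a, b)` becomes the scalar
equation `(a * c + b * d) * φ = 0`. In the ordinary system this row is paired with `e * (-d, c)`,
where `e = ε₁`; as `(-d, c)` is orthogonal to `(c, d)`, the determinant is again `a * c + b * d`,
up to the nonzero factor `e`.
-/

section Determinant

variable {R : Type*} [CommRing R]

theorem mulVec_injective_iff_det_ne_zero [IsDomain R] {n : Type*} [Fintype n] [DecidableEq n]
    {M : Matrix n n R} : Function.Injective M.mulVec ↔ M.det ≠ 0 := by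
  rw [← Matrix.coe_mulVecLin, injective_iff_map_eq_zero, Ne, ← Matrix.exists_mulVec_eq_zero_iff]
  simp only [Matrix.mulVecLin_apply, not_exists, not_and', ne_eq, not_not]

theorem det_mixed_eq (a b c d : R) :
    !![a, b, 0; -1, 0, c; 0, -1, d].det = a * c + b * d := by
  simp [Matrix.det_fin_three]

theorem det_ordinary_eq_mul_det_mixed (a b c d e : R) :
    !![a, b; -(e * d), e * c].det = e * !![a, b, 0; -1, 0, c; 0, -1, d].det := by
  rw [Matrix.det_fin_two_of, det_mixed_eq]
  ring

theorem M3_injective_iff_M2_injective_general [IsDomain R] (a b c d : R) {e : R} (he : e ≠ 0)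
    {M₂ : Matrix (Fin 2) (Fin 2) R} (hM₂ : M₂ = !![a, b; -(e * d), e * c])
    {M₃ : Matrix (Fin 3) (Fin 3) R} (hM₃ : M₃ = !![a, b, 0; -1, 0, c; 0, -1, d]) :
    (Function.Injective M₃.mulVec ↔ Function.Injective M₂.mulVec) ∧
    ((∃ v : Fin 3 → R, v ≠ 0 ∧ M₃.mulVec v = 0) ↔
     (∃ w : Fin 2 → R, w ≠ 0 ∧ M₂.mulVec w = 0)) := by
  have hdet : M₃.det = 0 ↔ M₂.det = 0 := by
    rw [hM₂, hM₃, det_ordinary_eq_mul_det_mixed, mul_eq_zero_iff_left he]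
  constructor
  · simpa only [mulVec_injective_iff_det_ne_zero] using hdet.not
  · simpa only [Matrix.exists_mulVec_eq_zero_iff] using hdet

end Determinant

theorem M3_injective_iff_M2_injective
    (H₀ H₀' J₀ J₀' H₁ J₁ J₁' ε₀ ε₁ k₀ k₁ α : ℂ) (hε₁ : ε₁ ≠ 0)
    (P : ℂ) (hP : P = J₀ + α * k₀ * J₀')
    (M₂ : Matrix (Fin 2) (Fin 2) ℂ)
    (hM₂ : M₂ = !![k₀ * H₀' * P, -ε₀ * H₀ * P;
                   -k₁ * H₁ * J₁', ε₁ * H₁ * J₁])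
    (M₃ : Matrix (Fin 3) (Fin 3) ℂ)
    (hM₃ : M₃ = !![k₀ * H₀' * P, -ε₀ * H₀ * P, 0;
                   -1, 0, H₁ * J₁;
                   0, -1, (k₁ / ε₁) * H₁ * J₁']) :
    (Function.Injective M₃.mulVec ↔ Function.Injective M₂.mulVec) ∧
    ((∃ v : Fin 3 → ℂ, v ≠ 0 ∧ M₃.mulVec v = 0) ↔
     (∃ w : Fin 2 → ℂ, w ≠ 0 ∧ M₂.mulVec w = 0)) := by
  refine M3_injective_iff_M2_injective_general _ _ _ _ hε₁ (hM₂.trans ?_) hM₃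
  field_simp
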